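/- Let C' be the rule: from ⊤→⊥ infer ⊥. Then for every set Γ of propositional formulas and every propositional formula A: Γ ⊢ A in BPC + C if and only if Γ ⊢ A in BPC + C'. In particular, EBPC can equivalently be axiomatized as BPC + C'. -/

import Mathlib

/-! ### Modal formulas -/

inductive MF : Type
  | atom : ℕ → MF
  | bot  : MF
  | and  : MF → MF → MF
  | or   : MF → MF → MF
  | imp  : MF → MF → MF
  | neg  : MF → MF
  | box  : MF → MF
  deriving DecidableEq

namespace MF

/-- The set of atoms occurring in a modal formula. -/
def atoms : MF → Set ℕ
  | atom n => {n}
  | bot => ∅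
  | and A B => atoms A ∪ atoms B
  | or A B => atoms A ∪ atoms B
  | imp A B => atoms A ∪ atoms B
  | neg A => atoms A
  | box A => atoms A

/-- A boolean valuation on modal formulas respecting the classical connectives
(boxed formulas and atoms are treated as arbitrary). -/
def Respects (v : MF → Bool) : Prop :=
  v bot = false ∧
  (∀ A B, v (and A B) = (v A && v B)) ∧
  (∀ A B, v (or A B) = (v A || v B)) ∧
  (∀ A B, v (imp A B) = (!(v A) || v B)) ∧
  (∀ A, v (neg A) = !(v A))

/-- Classical propositional tautology (in the modal language). -/
def IsTaut (A : MF) : Prop := ∀ v, Respects v → v A = true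

end MF

/-- Hilbert-style provability in the normal modal logic `K` extended by the
axiom scheme `Ax`: classical tautologies, scheme K, the extra axioms,
modus ponens and necessitation. -/
inductive Prv (Ax : MF → Prop) : MF → Prop
  | taut {A : MF} : MF.IsTaut A → Prv Ax A
  | axK {A B : MF} : Prv Ax ((MF.box (A.imp B)).imp ((MF.box A).imp (MF.box B)))
  | extra {A : MF} : Ax A → Prv Ax A
  | mp {A B : MF} : Prv Ax (A.imp B) → Prv Ax A → Prv Ax B
  | nec {A : MF} : Prv Ax A → Prv Ax A.box

/-- Scheme 4 : □A → □□A. -/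
def Ax4 (A : MF) : Prop := ∃ B, A = (MF.box B).imp (MF.box (MF.box B))
/-- Scheme T : □A → A. -/
def AxT (A : MF) : Prop := ∃ B, A = (MF.box B).imp B
/-- Scheme D : ¬□⊥. -/
def AxD (A : MF) : Prop := A = MF.neg (MF.box MF.bot)
/-- Löb's scheme L : □(□A→A) → □A. -/
def AxGL (A : MF) : Prop := ∃ B, A = (MF.box ((MF.box B).imp B)).imp (MF.box B)

def AxK4  : MF → Prop := Ax4
def AxKD4 : MF → Prop := fun A => Ax4 A ∨ AxD A
def AxS4  : MF → Prop := fun A => Ax4 A ∨ AxT A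

def PrvK   : MF → Prop := Prv (fun _ => False)
def PrvK4  : MF → Prop := Prv AxK4
def PrvKD4 : MF → Prop := Prv AxKD4
def PrvS4  : MF → Prop := Prv AxS4
def PrvGL  : MF → Prop := Prv AxGL

/-- Conjunction of a finite list of modal formulas (empty conjunction is ⊤ := ⊥→⊥). -/
def conjL (l : List MF) : MF := l.foldr MF.and (MF.imp MF.bot MF.bot)

/-- `ModalConseq Ax Γ A` : there are B₁,…,Bₙ ∈ Γ with ⊢ (B₁∧…∧Bₙ)→A in K + Ax. -/
def ModalConseq (Ax : MF → Prop) (Γ : Set MF) (A : MF) : Prop :=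
  ∃ l : List MF, (∀ B ∈ l, B ∈ Γ) ∧ Prv Ax ((conjL l).imp A)

/-! ### Annotated modal formulas and translations -/

/-- Modal formulas with every occurrence of □ annotated by a natural number. -/
inductive AMF : Type
  | atom : ℕ → AMF
  | bot  : AMF
  | and  : AMF → AMF → AMF
  | or   : AMF → AMF → AMF
  | imp  : AMF → AMF → AMF
  | neg  : AMF → AMF
  | box  : ℕ → AMF → AMF

namespace AMF

/-- Forget the annotations. -/
def erase : AMF → MF
  | atom n => .atom n
  | bot => .bot
  | and A B => .and (erase A) (erase B)
  | or A B => .or (erase A) (erase B)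
  | imp A B => .imp (erase A) (erase B)
  | neg A => .neg (erase A)
  | box _ A => .box (erase A)

/-- The list of all annotations occurring in an annotated formula. -/
def labels : AMF → List ℕ
  | atom _ => []
  | bot => []
  | and A B => labels A ++ labels B
  | or A B => labels A ++ labels B
  | imp A B => labels A ++ labels B
  | neg A => labels A
  | box n A => n :: labels A

/-- A translation is ordered when the number assigned to each box is strictly
greater than all numbers assigned to boxes in its scope. -/
def Ordered : AMF → Prop
  | atom _ => True
  | bot => True
  | and A B => Ordered A ∧ Ordered B
  | or A B => Ordered A ∧ Ordered B
  | imp A B => Ordered A ∧ Ordered B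
  | neg A => Ordered A
  | box n A => Ordered A ∧ ∀ m ∈ labels A, m < n

end AMF

/-- `conjQ q n` is the conjunction q₀ ∧ … ∧ q_n of the atoms `q i`. -/
def conjQ (q : ℕ → ℕ) : ℕ → MF
  | 0 => .atom (q 0)
  | n+1 => (conjQ q n).and (.atom (q (n+1)))

/-- The formula `A^t`: commutes with connectives and `(□B)^t = □(q₀∧…∧q_n → B^t)`
where `n` is the annotation on that box. -/
def AMF.trans (q : ℕ → ℕ) : AMF → MF
  | .atom n => .atom n
  | .bot => .bot
  | .and A B => (trans q A).and (trans q B)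
  | .or A B => (trans q A).or (trans q B)
  | .imp A B => (trans q A).imp (trans q B)
  | .neg A => (trans q A).neg
  | .box n A => .box ((conjQ q n).imp (trans q A))

/-! ### Kripke semantics -/

/-- Classical Kripke forcing for modal formulas. -/
def Forces {W : Type} (R : W → W → Prop) (V : ℕ → W → Prop) : W → MF → Prop
  | w, .atom n => V n w
  | _, .bot => False
  | w, .and A B => Forces R V w A ∧ Forces R V w B
  | w, .or A B => Forces R V w A ∨ Forces R V w B
  | w, .imp A B => Forces R V w A → Forces R V w B
  | w, .neg A => ¬ Forces R V w A
  | w, .box A => ∀ u, R w u → Forces R V u A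

/-- Cluster equivalence: `x = y`, or `x R y` and `y R x`. -/
def ClusterEq {W : Type} (R : W → W → Prop) (x y : W) : Prop :=
  x = y ∨ (R x y ∧ R y x)

/-- A transitive frame whose clusters form a tree and in which every cluster is
a single irreflexive point or a nonempty set of reflexive points. -/
structure TreeWithClusters {W : Type} (R : W → W → Prop) : Prop where
  trans : Transitive R
  rooted : ∃ r, ∀ x, ClusterEq R r x ∨ R r x
  treelike : ∀ x y z, R x z → R y z → (ClusterEq R x y ∨ R x y ∨ R y x)
  cluster_irrefl_singleton : ∀ x, ¬ R x x → ∀ y, ClusterEq R x y → y = x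
  cluster_homog : ∀ x y, ClusterEq R x y → (R x x → R y y)

/-! ### Expansions -/

/-- `Expansion A B` : `B ∈ E(A)`, the set of expansions of `A`. -/
inductive Expansion : MF → MF → Prop
  | atom (n) : Expansion (.atom n) (.atom n)
  | bot : Expansion .bot .bot
  | and {A B D E : MF} : Expansion A D → Expansion B E → Expansion (A.and B) (D.and E)
  | or {A B D E : MF} : Expansion A D → Expansion B E → Expansion (A.or B) (D.or E)
  | imp {A B D E : MF} : Expansion A D → Expansion B E → Expansion (A.imp B) (D.imp E)
  | neg {A D : MF} : Expansion A D → Expansion A.neg D.neg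
  | box {A D : MF} (l : List MF) : Expansion A D → (∀ E ∈ l, Expansion A E) →
      Expansion A.box (MF.box (l.foldr MF.or D))

/-! ### Propositional formulas and Visser-style natural deduction -/

inductive PF : Type
  | atom : ℕ → PF
  | bot  : PF
  | and  : PF → PF → PF
  | or   : PF → PF → PF
  | imp  : PF → PF → PF
  deriving DecidableEq

def PF.top : PF := .imp .bot .bot
def PF.neg (A : PF) : PF := A.imp .bot

/-- Natural deduction derivability from a set of assumptions.  `ef` switches
the ex falso rule on/off; `Rule` is an additional rule given as a relation
between a list of premises and a conclusion.  The base system (with `ef`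
and no extra rule) is Visser's BPC: ∧/∨ intro and elim, →I (discharging),
ex falso, and the formalized rules; no modus ponens. -/
inductive Deriv (ef : Prop) (Rule : List PF → PF → Prop) : Set PF → PF → Prop
  | hyp {Γ : Set PF} {A : PF} : A ∈ Γ → Deriv ef Rule Γ A
  | andI {Γ : Set PF} {A B : PF} : Deriv ef Rule Γ A → Deriv ef Rule Γ B → Deriv ef Rule Γ (A.and B)
  | andE1 {Γ : Set PF} {A B : PF} : Deriv ef Rule Γ (A.and B) → Deriv ef Rule Γ A
  | andE2 {Γ : Set PF} {A B : PF} : Deriv ef Rule Γ (A.and B) → Deriv ef Rule Γ B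
  | orI1 {Γ : Set PF} {A B : PF} : Deriv ef Rule Γ A → Deriv ef Rule Γ (A.or B)
  | orI2 {Γ : Set PF} {A B : PF} : Deriv ef Rule Γ B → Deriv ef Rule Γ (A.or B)
  | orE {Γ : Set PF} {A B C : PF} : Deriv ef Rule Γ (A.or B) → Deriv ef Rule (insert A Γ) C →
      Deriv ef Rule (insert B Γ) C → Deriv ef Rule Γ C
  | impI {Γ : Set PF} {A B : PF} : Deriv ef Rule (insert A Γ) B → Deriv ef Rule Γ (A.imp B)
  | exfalso {Γ : Set PF} {A : PF} : ef → Deriv ef Rule Γ .bot → Deriv ef Rule Γ A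
  | fAndI {Γ : Set PF} {A B C : PF} : Deriv ef Rule Γ (A.imp B) → Deriv ef Rule Γ (A.imp C) →
      Deriv ef Rule Γ (A.imp (B.and C))
  | fOrE {Γ : Set PF} {A B C : PF} : Deriv ef Rule Γ (A.imp C) → Deriv ef Rule Γ (B.imp C) →
      Deriv ef Rule Γ ((A.or B).imp C)
  | fTr {Γ : Set PF} {A B C : PF} : Deriv ef Rule Γ (A.imp B) → Deriv ef Rule Γ (B.imp C) →
      Deriv ef Rule Γ (A.imp C)
  | extra {Γ : Set PF} {ps : List PF} {c : PF} : Rule ps c → (∀ p ∈ ps, Deriv ef Rule Γ p) → Deriv ef Rule Γ c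

/-- No extra rule. -/
def RuleNone : List PF → PF → Prop := fun _ _ => False
/-- Rule C : from A and ¬A infer ⊥. -/
def RuleC : List PF → PF → Prop := fun ps c => ∃ A : PF, ps = [A, A.neg] ∧ c = .bot
/-- Rule R (modus ponens) : from A and A→B infer B. -/
def RuleR : List PF → PF → Prop := fun ps c => ∃ A B : PF, ps = [A, A.imp B] ∧ c = B
/-- Löb's rule L : from (A∧(A→B))→B infer A→B. -/
def RuleL : List PF → PF → Prop :=
  fun ps c => ∃ A B : PF, ps = [(A.and (A.imp B)).imp B] ∧ c = A.imp B
/-- Rule C' : from ⊤→⊥ infer ⊥. -/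
def RuleC' : List PF → PF → Prop := fun ps c => ps = [PF.top.imp .bot] ∧ c = .bot
/-- Rule R' : from ⊤→A infer A. -/
def RuleR' : List PF → PF → Prop := fun ps c => ∃ A : PF, ps = [PF.top.imp A] ∧ c = A
/-- Rule L' : from (⊤→A)→A infer ⊤→A. -/
def RuleL' : List PF → PF → Prop :=
  fun ps c => ∃ A : PF, ps = [(PF.top.imp A).imp A] ∧ c = PF.top.imp A

def BPC  : Set PF → PF → Prop := Deriv True RuleNone
def EBPC : Set PF → PF → Prop := Deriv True RuleC
def IPC  : Set PF → PF → Prop := Deriv True RuleR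
def FPL  : Set PF → PF → Prop := Deriv True RuleL
def MPC  : Set PF → PF → Prop := Deriv False RuleR

/-! ### BHK translations -/

/-- The BHK translation `b`. -/
def bhk : PF → MF
  | .atom n => .box (.atom n)
  | .bot => .box .bot
  | .and A B => (bhk A).and (bhk B)
  | .or A B => (bhk A).or (bhk B)
  | .imp A B => .box ((bhk A).imp (bhk B))

/-- The weak BHK translation `w`.  The propositional atom `n` is embedded as
the modal atom `n+1`, and the fresh atom `q` (not in the propositional
language) is the modal atom `0`; `⊥^w = □q`. -/
def wtr : PF → MF
  | .atom n => .box (.atom (n+1))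
  | .bot => .box (.atom 0)
  | .and A B => (wtr A).and (wtr B)
  | .or A B => (wtr A).or (wtr B)
  | .imp A B => .box ((wtr A).imp (wtr B))

/-! ### The cut-free sequent calculus G(KD4) -/

/-- Cut-free derivability in the sequent calculus G(KD4): axioms,
structural rules (weakening, contraction, exchange), two-sided rules for
∧, ∨, →, ¬, and the modal rules □₄R and □_D R. -/
inductive GKD4 : List MF → List MF → Prop
  | ax (A) : GKD4 [A] [A]
  | axBot : GKD4 [.bot] []
  | exL {Γ Γ' Δ : List MF} : GKD4 Γ Δ → Γ.Perm Γ' → GKD4 Γ' Δ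
  | exR {Γ Δ Δ' : List MF} : GKD4 Γ Δ → Δ.Perm Δ' → GKD4 Γ Δ'
  | wL {Γ Δ : List MF} (A : MF) : GKD4 Γ Δ → GKD4 (A :: Γ) Δ
  | wR {Γ Δ : List MF} (A : MF) : GKD4 Γ Δ → GKD4 Γ (A :: Δ)
  | cL {Γ Δ : List MF} {A : MF} : GKD4 (A :: A :: Γ) Δ → GKD4 (A :: Γ) Δ
  | cR {Γ Δ : List MF} {A : MF} : GKD4 Γ (A :: A :: Δ) → GKD4 Γ (A :: Δ)
  | andL1 {Γ Δ : List MF} {A B : MF} : GKD4 (A :: Γ) Δ → GKD4 (A.and B :: Γ) Δ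
  | andL2 {Γ Δ : List MF} {A B : MF} : GKD4 (B :: Γ) Δ → GKD4 (A.and B :: Γ) Δ
  | andR {Γ₀ Δ₀ Γ₁ Δ₁ : List MF} {A B : MF} : GKD4 Γ₀ (A :: Δ₀) → GKD4 Γ₁ (B :: Δ₁) →
      GKD4 (Γ₀ ++ Γ₁) (A.and B :: (Δ₀ ++ Δ₁))
  | orL {Γ₀ Δ₀ Γ₁ Δ₁ : List MF} {A B : MF} : GKD4 (A :: Γ₀) Δ₀ → GKD4 (B :: Γ₁) Δ₁ →
      GKD4 (A.or B :: (Γ₀ ++ Γ₁)) (Δ₀ ++ Δ₁)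
  | orR1 {Γ Δ : List MF} {A B : MF} : GKD4 Γ (A :: Δ) → GKD4 Γ (A.or B :: Δ)
  | orR2 {Γ Δ : List MF} {A B : MF} : GKD4 Γ (B :: Δ) → GKD4 Γ (A.or B :: Δ)
  | impL {Γ₀ Δ₀ Γ₁ Δ₁ : List MF} {A B : MF} : GKD4 Γ₀ (A :: Δ₀) → GKD4 (B :: Γ₁) Δ₁ →
      GKD4 (A.imp B :: (Γ₀ ++ Γ₁)) (Δ₀ ++ Δ₁)
  | impR {Γ Δ : List MF} {A B : MF} : GKD4 (A :: Γ) (B :: Δ) → GKD4 Γ (A.imp B :: Δ)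
  | negL {Γ Δ : List MF} {A : MF} : GKD4 Γ (A :: Δ) → GKD4 (A.neg :: Γ) Δ
  | negR {Γ Δ : List MF} {A : MF} : GKD4 (A :: Γ) Δ → GKD4 Γ (A.neg :: Δ)
  | box4R {Γ : List MF} {A : MF} : GKD4 (Γ ++ Γ.map MF.box) [A] → GKD4 (Γ.map MF.box) [MF.box A]
  | boxDR {Γ : List MF} : GKD4 (Γ ++ Γ.map MF.box) [] → GKD4 (Γ.map MF.box) []

/-- Disjunction of a finite list of propositional formulas (empty: ⊥). -/
def disjL : List PF → PF
  | [] => .bot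
  | [A] => A
  | A :: B :: r => A.or (disjL (B :: r))

/-! ### Kripke semantics for MPC -/

/-- Intuitionistic (minimal) forcing, where `⊥` has its own upward-closed
valuation `Vbot`. -/
def MForces {W : Type} (le : W → W → Prop) (V : ℕ → W → Prop) (Vbot : W → Prop) :
    W → PF → Prop
  | w, .atom n => V n w
  | w, .bot => Vbot w
  | w, .and A B => MForces le V Vbot w A ∧ MForces le V Vbot w B
  | w, .or A B => MForces le V Vbot w A ∨ MForces le V Vbot w B
  | w, .imp A B => ∀ u, le w u → MForces le V Vbot u A → MForces le V Vbot u B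

/-- The S4 valuation induced by an MPC valuation: the fresh atom `q` (modal
atom 0) gets `V(⊥)`, and the propositional atom `n` (modal atom `n+1`) gets `V(n)`. -/
def shiftVal {W : Type} (V : ℕ → W → Prop) (Vbot : W → Prop) : ℕ → W → Prop
  | 0 => Vbot
  | n+1 => V n

/-!
The two extra rules are interderivable. From `A` one gets `⊤ → A` by a vacuous `→I`, and the
formalized transitivity rule stands in for the missing modus ponens: composing `⊤ → A` with `¬A`
gives `⊤ → ⊥`, to which C' applies. Conversely, C' is the instance `A = ⊤` of C, because
`⊤ → ⊥` is `¬⊤` and `⊤` is provable.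
-/

namespace Deriv

variable {ef : Prop} {R S : List PF → PF → Prop} {Γ Δ : Set PF} {A B : PF}

theorem mono (h : Deriv ef R Γ A) (hΓΔ : Γ ⊆ Δ) : Deriv ef R Δ A := by
  induction h generalizing Δ with
  | hyp hA => exact .hyp (hΓΔ hA)
  | andI _ _ ihA ihB => exact .andI (ihA hΓΔ) (ihB hΓΔ)
  | andE1 _ ih => exact .andE1 (ih hΓΔ)
  | andE2 _ ih => exact .andE2 (ih hΓΔ)
  | orI1 _ ih => exact .orI1 (ih hΓΔ)
  | orI2 _ ih => exact .orI2 (ih hΓΔ)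
  | orE _ _ _ ihOr ihA ihB =>
    exact .orE (ihOr hΓΔ) (ihA (Set.insert_subset_insert hΓΔ)) (ihB (Set.insert_subset_insert hΓΔ))
  | impI _ ih => exact .impI (ih (Set.insert_subset_insert hΓΔ))
  | exfalso hef _ ih => exact .exfalso hef (ih hΓΔ)
  | fAndI _ _ ihB ihC => exact .fAndI (ihB hΓΔ) (ihC hΓΔ)
  | fOrE _ _ ihA ihB => exact .fOrE (ihA hΓΔ) (ihB hΓΔ)
  | fTr _ _ ihAB ihBC => exact .fTr (ihAB hΓΔ) (ihBC hΓΔ)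
  | extra hR _ ih => exact .extra hR fun p hp => ih p hp hΓΔ

theorem top : Deriv ef R Γ PF.top :=
  .impI (.hyp (Set.mem_insert _ _))

theorem imp_of_right (hB : Deriv ef R Γ B) : Deriv ef R Γ (A.imp B) :=
  .impI (hB.mono (Set.subset_insert _ _))

theorem top_imp_of_imp (hA : Deriv ef R Γ A) (hAB : Deriv ef R Γ (A.imp B)) :
    Deriv ef R Γ (PF.top.imp B) :=
  .fTr hA.imp_of_right hAB

/-- The rule `S` is derivable in the system with extra rule `R`: over every set of assumptions,
the derivable formulas are closed under `S`. It is used to compare systems with different extra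
rules. -/
def IsDerivableRule (ef : Prop) (R S : List PF → PF → Prop) : Prop :=
  ∀ ⦃Γ : Set PF⦄ ⦃ps : List PF⦄ ⦃c : PF⦄, S ps c → (∀ p ∈ ps, Deriv ef R Γ p) → Deriv ef R Γ c

theorem of_isDerivableRule (hS : IsDerivableRule ef R S) (h : Deriv ef S Γ A) :
    Deriv ef R Γ A := by
  induction h with
  | hyp hA => exact .hyp hA
  | andI _ _ ihA ihB => exact .andI ihA ihB
  | andE1 _ ih => exact .andE1 ih
  | andE2 _ ih => exact .andE2 ih
  | orI1 _ ih => exact .orI1 ih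
  | orI2 _ ih => exact .orI2 ih
  | orE _ _ _ ihOr ihA ihB => exact .orE ihOr ihA ihB
  | impI _ ih => exact .impI ih
  | exfalso hef _ ih => exact .exfalso hef ih
  | fAndI _ _ ihB ihC => exact .fAndI ihB ihC
  | fOrE _ _ ihA ihB => exact .fOrE ihA ihB
  | fTr _ _ ihAB ihBC => exact .fTr ihAB ihBC
  | extra hR _ ih => exact hS hR ih

theorem bot_of_neg (hA : Deriv ef RuleC Γ A) (hnA : Deriv ef RuleC Γ A.neg) :
    Deriv ef RuleC Γ .bot :=
  .extra ⟨A, rfl, rfl⟩ (by simp [hA, hnA])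

theorem bot_of_top_imp_bot (h : Deriv ef RuleC' Γ (PF.top.imp .bot)) : Deriv ef RuleC' Γ .bot :=
  .extra ⟨rfl, rfl⟩ (List.forall_mem_singleton.2 h)

theorem isDerivableRule_ruleC : IsDerivableRule ef RuleC' RuleC := by
  rintro Γ _ _ ⟨A, rfl, rfl⟩ hprem
  have hA : Deriv ef RuleC' Γ A := hprem A (by simp)
  have hnA : Deriv ef RuleC' Γ A.neg := hprem A.neg (by simp)
  exact bot_of_top_imp_bot (hA.top_imp_of_imp hnA)

theorem isDerivableRule_ruleC' : IsDerivableRule ef RuleC RuleC' := by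
  rintro Γ _ _ ⟨rfl, rfl⟩ hprem
  exact bot_of_neg top (List.forall_mem_singleton.1 hprem)

end Deriv

theorem stmt10_general (ef : Prop) (Γ : Set PF) (A : PF) :
    Deriv ef RuleC Γ A ↔ Deriv ef RuleC' Γ A :=
  ⟨Deriv.of_isDerivableRule Deriv.isDerivableRule_ruleC,
    Deriv.of_isDerivableRule Deriv.isDerivableRule_ruleC'⟩

theorem stmt10 (Γ : Set PF) (A : PF) :
    Deriv True RuleC Γ A ↔ Deriv True RuleC' Γ A :=
  stmt10_general True Γ A
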